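/- Let m ≥ 1 and 0 ≤ s < 2m. If s is even, then the ℂ-linear span of {W_m(n) : 2^s ≤ n < 2^{s+1}} equals the set of matrices of the form A ⊗ r^{(1,0)} ⊗ I, where A ranges over all 2^{s/2} × 2^{s/2} complex matrices and I is the identity matrix of size 2^{m − s/2 − 1}. If s is odd, then this span equals the set of matrices of the form A ⊗ r^{(0,1)} ⊗ I + B ⊗ r^{(1,1)} ⊗ I, where A, B range over all 2^{(s−1)/2} × 2^{(s−1)/2} complex matrices and I is the identity matrix of size 2^{m − (s+1)/2}. -/

import Mathlib

open Matrix

/-- The four 2×2 Rademacher matrices `r^{(γ₀,γ₁)}`, indexed by the two bits. -/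
noncomputable def radMat : Bool → Bool → Matrix (Fin 2) (Fin 2) ℂ
  | false, false => !![1, 0; 0, 1]
  | true,  false => !![1, 0; 0, -1]
  | false, true  => !![0, 1; 1, 0]
  | true,  true  => !![0, 1; -1, 0]

/-- The Walsh matrix `W_m(n) = r^{(γ₀,γ₁)} ⊗ r^{(γ₂,γ₃)} ⊗ ⋯ ⊗ r^{(γ_{2m-2},γ_{2m-1})}`
as a `2^m × 2^m` complex matrix, where `γ_i` are the binary digits of `n`. -/
noncomputable def walshMatrix : (m : ℕ) → ℕ → Matrix (Fin (2 ^ m)) (Fin (2 ^ m)) ℂ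
  | 0, _ => 1
  | m + 1, n =>
    Matrix.reindex
      ((finProdFinEquiv (m := 2) (n := 2 ^ m)).trans (finCongr (by ring)))
      ((finProdFinEquiv (m := 2) (n := 2 ^ m)).trans (finCongr (by ring)))
      (Matrix.kroneckerMap (· * ·) (radMat (n.testBit 0) (n.testBit 1)) (walshMatrix m (n / 4)))

/-- The triple Kronecker product `A ⊗ B ⊗ C`, reindexed as a square matrix of size `d = a*(b*c)`. -/
noncomputable def kron3 {a b c d : ℕ} (h : a * (b * c) = d)
    (A : Matrix (Fin a) (Fin a) ℂ) (B : Matrix (Fin b) (Fin b) ℂ)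
    (C : Matrix (Fin c) (Fin c) ℂ) : Matrix (Fin d) (Fin d) ℂ :=
  Matrix.reindex
    ((((Equiv.refl (Fin a)).prodCongr finProdFinEquiv).trans finProdFinEquiv).trans (finCongr h))
    ((((Equiv.refl (Fin a)).prodCongr finProdFinEquiv).trans finProdFinEquiv).trans (finCongr h))
    (Matrix.kroneckerMap (· * ·) A (Matrix.kroneckerMap (· * ·) B C))

lemma walsh_size_eq (m s : ℕ) (hm : 1 ≤ m) (hs : s < 2 * m) :
    2 ^ (s / 2) * (2 * 2 ^ (m - s / 2 - 1)) = 2 ^ m := by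
  have h : s / 2 + (m - s / 2 - 1 + 1) = m := by omega
  calc 2 ^ (s / 2) * (2 * 2 ^ (m - s / 2 - 1))
      = 2 ^ (s / 2) * 2 ^ (m - s / 2 - 1 + 1) := by rw [pow_succ]; ring
    _ = 2 ^ m := by rw [← pow_add, h]

noncomputable def wK {d e : ℕ} (h : 2 * d = e) (R : Matrix (Fin 2) (Fin 2) ℂ) :
    Matrix (Fin d) (Fin d) ℂ →ₗ[ℂ] Matrix (Fin e) (Fin e) ℂ where
  toFun M := Matrix.reindex (finProdFinEquiv.trans (finCongr h)) (finProdFinEquiv.trans (finCongr h))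
    (Matrix.kroneckerMap (· * ·) R M)
  map_add' M N := by ext i j; simp [mul_add]
  map_smul' c M := by ext i j; simp; ring

noncomputable def wL {a b c d : ℕ} (h : a * (b * c) = d)
    (B : Matrix (Fin b) (Fin b) ℂ) (C : Matrix (Fin c) (Fin c) ℂ) :
    Matrix (Fin a) (Fin a) ℂ →ₗ[ℂ] Matrix (Fin d) (Fin d) ℂ where
  toFun A := kron3 h A B C
  map_add' M N := by ext i j; simp [kron3, add_mul]
  map_smul' c M := by ext i j; simp [kron3]; ring

lemma walsh_succ (m n : ℕ) (h : 2 * 2 ^ m = 2 ^ (m + 1)) : walshMatrix (m + 1) n =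
    wK h (radMat (n.testBit 0) (n.testBit 1)) (walshMatrix m (n / 4)) := rfl

lemma walsh_zero (m : ℕ) : walshMatrix m 0 = 1 := by
  induction m with
  | zero => rfl
  | succ m ih =>
    rw [walsh_succ m 0 (by ring)]
    have h1 : radMat false false = 1 := by
      ext i j; fin_cases i <;> fin_cases j <;> simp [radMat]
    simp [ih, wK, h1]
    exact Matrix.submatrix_one_equiv ((finCongr (by ring)).trans finProdFinEquiv.symm)

lemma wK_kron3 {a b c d e f : ℕ} (h : a * (b * c) = d) (h1 : 2 * d = e) (h2 : 2 * a = f)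
    (h3 : f * (b * c) = e) (R : Matrix (Fin 2) (Fin 2) ℂ)
    (A : Matrix (Fin a) (Fin a) ℂ) (B : Matrix (Fin b) (Fin b) ℂ)
    (C : Matrix (Fin c) (Fin c) ℂ) :
    wK h1 R (kron3 h A B C) = kron3 h3 (wK h2 R A) B C := by
  subst h h1 h2
  have e1 : ∀ i, i % (a * (b * c)) / (b * c) = i / (b * c) % a := fun i => by
    rw [mul_comm a, Nat.mod_mul_right_div_self]
  have e2 : ∀ i, i % (a * (b * c)) % (b * c) = i % (b * c) := fun i =>
    Nat.mod_mod_of_dvd _ (Dvd.intro_left _ rfl)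
  have e3 : ∀ i, i / (a * (b * c)) = i / (b * c) / a := fun i => by
    rw [Nat.div_div_eq_div_mul, mul_comm a]
  ext i j
  simp only [wK, kron3, LinearMap.coe_mk, AddHom.coe_mk, Matrix.reindex_apply,
    Matrix.submatrix_apply, Matrix.kroneckerMap_apply, mul_assoc]
  simp [finProdFinEquiv, Fin.divNat, Fin.modNat, e1, e2, e3]

lemma kron3_one_left {b c d : ℕ} (h : 2 ^ 0 * (b * c) = d) (h' : b * c = d)
    (B : Matrix (Fin b) (Fin b) ℂ) (C : Matrix (Fin c) (Fin c) ℂ) :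
    kron3 h (1 : Matrix (Fin (2 ^ 0)) (Fin (2 ^ 0)) ℂ) B C =
    Matrix.reindex (finProdFinEquiv.trans (finCongr h')) (finProdFinEquiv.trans (finCongr h'))
    (Matrix.kroneckerMap (· * ·) B C) := by
  subst h'
  ext i j
  have : ∀ x y : Fin (2 ^ 0), (1 : Matrix (Fin (2 ^ 0)) (Fin (2 ^ 0)) ℂ) x y = 1 := by
    intro x y
    have : x = y := Subsingleton.elim (α := Fin 1) x y
    subst this
    exact Matrix.one_apply_eq x
  have hi : ∀ i : Fin (b * c), (i : ℕ) % (b * c) = i := fun i => Nat.mod_eq_of_lt i.2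
  simp only [kron3, Matrix.reindex_apply,
    Matrix.submatrix_apply, Matrix.kroneckerMap_apply, this, one_mul]
  simp [finProdFinEquiv, Fin.divNat, Fin.modNat, hi]

lemma walsh_eq_kron3 (k c : ℕ) : ∀ (m n b : ℕ) (_ : m = c + 1 + k)
    (h : 2 ^ k * (2 * 2 ^ c) = 2 ^ m) (_ : n < 4 ^ k) (_ : b < 4),
    walshMatrix m (n + 4 ^ k * b) =
      kron3 h (walshMatrix k n) (radMat (b.testBit 0) (b.testBit 1)) 1 := by
  induction k with
  | zero =>
    intro m n b hm h hn hb
    obtain rfl : n = 0 := by simpa using hn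
    subst hm
    rw [walsh_zero, kron3_one_left _ (by ring)]
    have : (0 + 4 ^ 0 * b) = b := by ring
    rw [this]
    change walshMatrix (c + 1) b = _
    rw [walsh_succ _ _ (by ring), Nat.div_eq_of_lt hb, walsh_zero]
    rfl
  | succ k ih =>
    intro m n b hm h hn hb
    obtain ⟨m, rfl⟩ : ∃ m', m = m' + 1 := ⟨c + 1 + k, by omega⟩
    have h0 : 2 ^ k * (2 * 2 ^ c) = 2 ^ m := by
      obtain rfl : m = c + 1 + k := by omega
      ring
    have e0 : n + 4 ^ (k + 1) * b = n + 4 * (4 ^ k * b) := by ring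
    have t0 : (n + 4 ^ (k + 1) * b).testBit 0 = n.testBit 0 := by
      rw [e0]; simp only [Nat.testBit_zero]; congr 1; apply propext; omega
    have t1 : (n + 4 ^ (k + 1) * b).testBit 1 = n.testBit 1 := by
      rw [e0]; simp only [Nat.testBit_succ, Nat.testBit_zero]; congr 1; apply propext; omega
    have d0 : (n + 4 ^ (k + 1) * b) / 4 = n / 4 + 4 ^ k * b := by
      rw [e0]; omega
    rw [walsh_succ m _ (by ring), t0, t1, d0, ih m (n / 4) b (by omega) h0
      (by rw [pow_succ] at hn; omega) hb, walsh_succ k n (by ring)]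
    exact wK_kron3 _ _ _ _ _ _ _ _

lemma wK_decomp {d e : ℕ} (h : 2 * d = e) (M : Matrix (Fin e) (Fin e) ℂ) :
    ∃ P : Bool → Bool → Matrix (Fin d) (Fin d) ℂ,
      M = wK h (radMat false false) (P false false) + wK h (radMat true false) (P true false)
        + wK h (radMat false true) (P false true) + wK h (radMat true true) (P true true) := by
  subst h
  let Q : Fin 2 → Fin 2 → Matrix (Fin d) (Fin d) ℂ := fun i j => Matrix.of fun x y =>
    M (finProdFinEquiv (i, x)) (finProdFinEquiv (j, y))
  refine ⟨fun a b => match a, b with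
    | false, false => (1 / 2 : ℂ) • (Q 0 0 + Q 1 1)
    | true, false => (1 / 2 : ℂ) • (Q 0 0 - Q 1 1)
    | false, true => (1 / 2 : ℂ) • (Q 0 1 + Q 1 0)
    | true, true => (1 / 2 : ℂ) • (Q 0 1 - Q 1 0), ?_⟩
  ext i j
  obtain ⟨⟨i, x⟩, rfl⟩ := finProdFinEquiv.surjective i
  obtain ⟨⟨j, y⟩, rfl⟩ := finProdFinEquiv.surjective j
  simp only [wK, LinearMap.coe_mk, AddHom.coe_mk, Matrix.reindex_apply, Matrix.add_apply,
    Matrix.submatrix_apply, Matrix.kroneckerMap_apply, finCongr_refl, Equiv.trans_refl,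
    Equiv.symm_apply_apply, Matrix.smul_apply, Matrix.sub_apply, smul_eq_mul]
  fin_cases i <;> fin_cases j <;> simp [radMat, Q] <;> ring

lemma walsh_span_top (k : ℕ) :
    Submodule.span ℂ {M | ∃ n : ℕ, n < 4 ^ k ∧ M = walshMatrix k n} = ⊤ := by
  induction k with
  | zero =>
    rw [eq_top_iff]
    intro M _
    have : M = M 0 0 • walshMatrix 0 0 := by
      ext i j
      have hi : i = 0 := Subsingleton.elim (α := Fin 1) i 0
      have hj : j = 0 := Subsingleton.elim (α := Fin 1) j 0
      subst hi hj
      simp [walsh_zero]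
    rw [this]
    exact Submodule.smul_mem _ _ (Submodule.subset_span ⟨0, by simp, rfl⟩)
  | succ k ih =>
    have key : ∀ a b (P : Matrix (Fin (2 ^ k)) (Fin (2 ^ k)) ℂ),
        wK (show 2 * 2 ^ k = 2 ^ (k + 1) by ring) (radMat a b) P ∈
        Submodule.span ℂ {M | ∃ n : ℕ, n < 4 ^ (k + 1) ∧ M = walshMatrix (k + 1) n} := by
      intro a b P
      have hP : P ∈ Submodule.span ℂ {M | ∃ n : ℕ, n < 4 ^ k ∧ M = walshMatrix k n} := by
        rw [ih]; trivial
      have := Submodule.mem_map_of_mem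
        (f := wK (show 2 * 2 ^ k = 2 ^ (k + 1) by ring) (radMat a b)) hP
      rw [Submodule.map_span] at this
      refine Submodule.span_mono ?_ this
      rintro _ ⟨_, ⟨n, hn, rfl⟩, rfl⟩
      refine ⟨4 * n + 2 * b.toNat + a.toNat, ?_, ?_⟩
      · rw [pow_succ]; cases a <;> cases b <;> simp <;> omega
      · rw [walsh_succ k _ (by ring)]
        congr 2
        · congr 1
          · cases a <;> cases b <;> simp [Nat.testBit_zero] <;> omega
          · cases a <;> cases b <;> simp [Nat.testBit_succ, Nat.testBit_zero] <;> omega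
        · cases a <;> cases b <;> simp <;> omega
    rw [eq_top_iff]
    intro M _
    obtain ⟨P, hP⟩ := wK_decomp (show 2 * 2 ^ k = 2 ^ (k + 1) by ring) M
    rw [hP]
    exact add_mem (add_mem (add_mem (key _ _ _) (key _ _ _)) (key _ _ _)) (key _ _ _)

lemma walsh_block (m k c b : ℕ) (hm : m = c + 1 + k) (hb : b < 4)
    (h : 2 ^ k * (2 * 2 ^ c) = 2 ^ m) :
    Submodule.span ℂ {M | ∃ n : ℕ, n < 4 ^ k ∧ M = walshMatrix m (n + 4 ^ k * b)} =
    LinearMap.range (wL h (radMat (b.testBit 0) (b.testBit 1)) 1) := by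
  rw [LinearMap.range_eq_map, ← walsh_span_top k, Submodule.map_span]
  congr 1
  ext M
  constructor
  · rintro ⟨n, hn, rfl⟩
    exact ⟨_, ⟨n, hn, rfl⟩, (walsh_eq_kron3 k c m n b hm h hn hb).symm⟩
  · rintro ⟨_, ⟨n, hn, rfl⟩, rfl⟩
    exact ⟨n, hn, (walsh_eq_kron3 k c m n b hm h hn hb).symm⟩

theorem walsh_span_shell (m s : ℕ) (hm : 1 ≤ m) (hs : s < 2 * m) :
    (s % 2 = 0 →
      (Submodule.span ℂ {M : Matrix (Fin (2 ^ m)) (Fin (2 ^ m)) ℂ |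
          ∃ n : ℕ, 2 ^ s ≤ n ∧ n < 2 ^ (s + 1) ∧ M = walshMatrix m n} :
        Set (Matrix (Fin (2 ^ m)) (Fin (2 ^ m)) ℂ)) =
      {M | ∃ A : Matrix (Fin (2 ^ (s / 2))) (Fin (2 ^ (s / 2))) ℂ,
          M = kron3 (walsh_size_eq m s hm hs) A (radMat true false)
                (1 : Matrix (Fin (2 ^ (m - s / 2 - 1))) (Fin (2 ^ (m - s / 2 - 1))) ℂ)}) ∧
    (s % 2 = 1 →
      (Submodule.span ℂ {M : Matrix (Fin (2 ^ m)) (Fin (2 ^ m)) ℂ |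
          ∃ n : ℕ, 2 ^ s ≤ n ∧ n < 2 ^ (s + 1) ∧ M = walshMatrix m n} :
        Set (Matrix (Fin (2 ^ m)) (Fin (2 ^ m)) ℂ)) =
      {M | ∃ A B : Matrix (Fin (2 ^ (s / 2))) (Fin (2 ^ (s / 2))) ℂ,
          M = kron3 (walsh_size_eq m s hm hs) A (radMat false true)
                (1 : Matrix (Fin (2 ^ (m - s / 2 - 1))) (Fin (2 ^ (m - s / 2 - 1))) ℂ)
            + kron3 (walsh_size_eq m s hm hs) B (radMat true true)
                (1 : Matrix (Fin (2 ^ (m - s / 2 - 1))) (Fin (2 ^ (m - s / 2 - 1))) ℂ)}) := by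
  have hm' : m = (m - s / 2 - 1) + 1 + s / 2 := by omega
  have h4 : (4 : ℕ) ^ (s / 2) = 2 ^ (2 * (s / 2)) := by rw [pow_mul]; norm_num
  have B := fun b hb => walsh_block m (s / 2) _ b hm' hb (walsh_size_eq m s hm hs)
  constructor
  · intro h0
    have hs2 : 2 ^ s = 4 ^ (s / 2) := by rw [h4]; congr 1; omega
    have := B 1 (by norm_num)
    have hset : {M : Matrix (Fin (2 ^ m)) (Fin (2 ^ m)) ℂ |
          ∃ n : ℕ, 2 ^ s ≤ n ∧ n < 2 ^ (s + 1) ∧ M = walshMatrix m n} =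
        {M | ∃ n : ℕ, n < 4 ^ (s / 2) ∧ M = walshMatrix m (n + 4 ^ (s / 2) * 1)} := by
      rw [pow_succ, hs2]
      ext M
      constructor
      · rintro ⟨n, h1, h2, rfl⟩
        exact ⟨n - 4 ^ (s / 2), by omega, by congr 1; omega⟩
      · rintro ⟨n, h1, rfl⟩
        exact ⟨n + 4 ^ (s / 2) * 1, by omega, by omega, rfl⟩
    rw [hset, this]
    ext M
    constructor
    · rintro ⟨A, rfl⟩
      exact ⟨A, rfl⟩
    · rintro ⟨A, rfl⟩
      exact ⟨A, rfl⟩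
  · intro h0
    have hs2 : 2 ^ s = 4 ^ (s / 2) * 2 := by rw [h4, ← pow_succ]; congr 1; omega
    have hset : {M : Matrix (Fin (2 ^ m)) (Fin (2 ^ m)) ℂ |
          ∃ n : ℕ, 2 ^ s ≤ n ∧ n < 2 ^ (s + 1) ∧ M = walshMatrix m n} =
        {M | ∃ n : ℕ, n < 4 ^ (s / 2) ∧ M = walshMatrix m (n + 4 ^ (s / 2) * 2)} ∪
        {M | ∃ n : ℕ, n < 4 ^ (s / 2) ∧ M = walshMatrix m (n + 4 ^ (s / 2) * 3)} := by
      rw [pow_succ, hs2]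
      ext M
      constructor
      · rintro ⟨n, h1, h2, rfl⟩
        by_cases h3 : n < 4 ^ (s / 2) * 3
        · exact Or.inl ⟨n - 4 ^ (s / 2) * 2, by omega, by congr 1; omega⟩
        · exact Or.inr ⟨n - 4 ^ (s / 2) * 3, by omega, by congr 1; omega⟩
      · rintro (⟨n, h1, rfl⟩ | ⟨n, h1, rfl⟩)
        · exact ⟨n + 4 ^ (s / 2) * 2, by omega, by omega, rfl⟩
        · exact ⟨n + 4 ^ (s / 2) * 3, by omega, by omega, rfl⟩
    rw [hset, Submodule.span_union, B 2 (by norm_num), B 3 (by norm_num)]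
    ext M
    rw [SetLike.mem_coe, Submodule.mem_sup]
    constructor
    · rintro ⟨_, ⟨A, rfl⟩, _, ⟨A', rfl⟩, rfl⟩
      exact ⟨A, A', rfl⟩
    · rintro ⟨A, A', rfl⟩
      exact ⟨_, ⟨A, rfl⟩, _, ⟨A', rfl⟩, rfl⟩
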